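/- arXiv:1604.05439 — 2 statements merged into one kernel-verified Lean document; each statement's English description precedes it below -/
import Mathlib

section
/- Let E be a graph with finitely many vertices. Then the map η ↦ saturation of H(∪η) is a bijective order isomorphism (with respect to set inclusion) from the hereditary subsets of Γ_E onto the saturated hereditary subsets of E⁰; moreover ∪η = (∪Γ_E) ∩ (saturation of H(∪η)). Conversely, for every saturated hereditary subset H ⊆ E⁰, the set (∪Γ_E) ∩ H is a disjoint union of all the components that intersect H nontrivially, the set η of these components is a hereditary subset of Γ_E, and the saturation of H(∪η) equals H. -/
attribute [local instance] Classical.propDecidable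

/-- A directed graph: a set of vertices, a set of edges, and source/range maps. -/
structure DirGraph : Type 1 where
  V : Type
  E : Type
  s : E → V
  r : E → V

namespace DirGraph

variable (G : DirGraph)

/-- A vertex is regular if it emits a finite nonzero number of edges. -/
def Regular (v : G.V) : Prop :=
  {e : G.E | G.s e = v}.Finite ∧ {e : G.E | G.s e = v}.Nonempty

/-- A vertex is a sink if it emits no edges. -/
def IsSink (v : G.V) : Prop := ∀ e : G.E, G.s e ≠ v

/-- A vertex is an infinite emitter if it emits infinitely many edges. -/
def InfiniteEmitter (v : G.V) : Prop := {e : G.E | G.s e = v}.Infinite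

/-- One-step reachability: there is an edge from `u` to `v`. -/
def Step (u v : G.V) : Prop := ∃ e : G.E, G.s e = u ∧ G.r e = v

/-- `Reach u v` means there is a (possibly empty) path from `u` to `v`, i.e. `u ≥ v`. -/
def Reach : G.V → G.V → Prop := Relation.ReflTransGen G.Step

/-- A vertex supports a cycle if there is a nonempty path from it to itself. -/
def SupportsCycle (v : G.V) : Prop := Relation.TransGen G.Step v v

/-- A transition state is a regular vertex which does not support a cycle. -/
def TransitionState (v : G.V) : Prop := G.Regular v ∧ ¬ G.SupportsCycle v

/-- A set of vertices is hereditary if it is closed under reachability. -/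
def Hereditary (H : Set G.V) : Prop := ∀ u v : G.V, u ∈ H → G.Reach u v → v ∈ H

/-- A set of vertices is saturated if it contains every regular vertex all of whose
emitted edges end in the set. -/
def Saturated (S : Set G.V) : Prop :=
  ∀ v : G.V, G.Regular v → (∀ e : G.E, G.s e = v → G.r e ∈ S) → v ∈ S

/-- `H(S)`: the smallest hereditary set containing `S`. -/
def heredClosure (S : Set G.V) : Set G.V := ⋂₀ {H : Set G.V | G.Hereditary H ∧ S ⊆ H}

/-- The saturation of `S`: the smallest saturated set containing `S`. -/
def saturate (S : Set G.V) : Set G.V := ⋂₀ {T : Set G.V | G.Saturated T ∧ S ⊆ T}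

/-- A nonempty set is strongly connected if any two of its vertices are joined by
a nonempty path. -/
def StronglyConn (S : Set G.V) : Prop :=
  S.Nonempty ∧ ∀ u ∈ S, ∀ v ∈ S, Relation.TransGen G.Step u v

/-- The components of `G` (elements of `Γ_E`): maximal strongly connected subsets together
with singletons of singular vertices not supporting a cycle. -/
def IsComponent (γ : Set G.V) : Prop :=
  (G.StronglyConn γ ∧ ∀ δ : Set G.V, G.StronglyConn δ → γ ⊆ δ → δ = γ) ∨
  (∃ v : G.V, γ = {v} ∧ ¬ G.Regular v ∧ ¬ G.SupportsCycle v)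

/-- The order on components: `γ ≥ δ` iff some vertex of `γ` reaches some vertex of `δ`. -/
def CompGE (γ δ : Set G.V) : Prop := ∃ u ∈ γ, ∃ w ∈ δ, G.Reach u w

/-- `η` is a hereditary set of components. -/
def HeredComp (η : Set (Set G.V)) : Prop :=
  (∀ γ ∈ η, G.IsComponent γ) ∧
  ∀ γ δ : Set G.V, γ ∈ η → G.IsComponent δ → G.CompGE γ δ → δ ∈ η

/-- A list of edges is a path if consecutive edges are composable. -/
def IsPathChain (p : List G.E) : Prop := List.Chain' (fun e f => G.r e = G.s f) p

/-- `p` is a return path based at `v`: a nonempty path from `v` to `v` not revisiting `v`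
before the final edge. -/
def IsReturnPath (v : G.V) (p : List G.E) : Prop :=
  ∃ h : p ≠ [], G.IsPathChain p ∧ G.s (p.head h) = v ∧ G.r (p.getLast h) = v ∧
    ∀ e ∈ p.dropLast, G.r e ≠ v

/-- `v` supports (at least) two distinct return paths. -/
def TwoReturnPaths (v : G.V) : Prop :=
  ∃ p q : List G.E, G.IsReturnPath v p ∧ G.IsReturnPath v q ∧ p ≠ q

/-- `v` supports a unique return path. -/
def UniqueReturnPath (v : G.V) : Prop := ∃! p : List G.E, G.IsReturnPath v p

/-- A component is cyclic if each of its vertices supports exactly one return path. -/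
def CyclicComponent (γ : Set G.V) : Prop :=
  G.IsComponent γ ∧ ∀ v ∈ γ, G.UniqueReturnPath v

/-- Condition (K): every vertex supports either no return path or at least two. -/
def ConditionK : Prop :=
  ∀ v : G.V, (¬ ∃ p : List G.E, G.IsReturnPath v p) ∨ G.TwoReturnPaths v

/-- The cycle (or path) `p` has an exit. -/
def HasExit (p : List G.E) : Prop := ∃ f e : G.E, e ∈ p ∧ G.s f = G.s e ∧ f ≠ e

/-- `p` is a nonempty path from `v` to `w`. -/
def IsPathFromTo (v w : G.V) (p : List G.E) : Prop :=
  ∃ h : p ≠ [], G.IsPathChain p ∧ G.s (p.head h) = v ∧ G.r (p.getLast h) = w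

/-- Condition (H). -/
def ConditionH : Prop :=
  ∀ v : G.V, G.Regular v → G.UniqueReturnPath v →
    (∀ p : List G.E, G.IsReturnPath v p → ¬ G.HasExit p) ∨
    ∃ w : G.V, w ≠ v ∧ (¬ G.Regular w ∨ G.UniqueReturnPath w) ∧
      (∃ p : List G.E, G.IsPathFromTo v w p) ∧
      ∀ p : List G.E, G.IsPathFromTo v w p → ∀ e ∈ p,
        ¬ G.TwoReturnPaths (G.s e) ∧ ¬ G.TwoReturnPaths (G.r e)

/-- The temperature `τ_E(γ) = sgn(|γ¹| − |γ|)` of a set of vertices, with the conventions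
`sgn(0) = 0` and `sgn(∞) = 1`. -/
noncomputable def temp (γ : Set G.V) : ℤ :=
  if {e : G.E | G.s e ∈ γ ∧ G.r e ∈ γ}.Infinite then 1
  else Int.sign ((Nat.card {e : G.E | G.s e ∈ γ ∧ G.r e ∈ γ} : ℤ) - (Nat.card γ : ℤ))

end DirGraph

/-!
Mutually inverse monotone maps are given by `η ↦ saturate (heredClosure (⋃₀ η))` and by sending `H`
to the set of components meeting `H`. Two observations make them inverse to each other.

* The complement of a component is saturated, because a regular vertex of a component lies on a
  cycle and hence emits an edge back into the component. So saturating a set never makes it meet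
  new components, and `η` is recovered from its image.
* A vertex outside all components is a transition state. If no infinite path runs through transition
  states only, well-founded induction along the edges shows that every vertex of `H` lies in any
  saturated set containing the components which meet `H`.
-/

namespace DirGraph

section Closure

variable {G : DirGraph} {S H : Set G.V} {v : G.V}

lemma mem_heredClosure : v ∈ G.heredClosure S ↔ ∃ u ∈ S, G.Reach u v := by
  refine ⟨fun hv => hv {w | ∃ u ∈ S, G.Reach u w} ⟨?_, fun u hu => ⟨u, hu, .refl⟩⟩, ?_⟩
  · rintro v w ⟨u, hu, huv⟩ hvw
    exact ⟨u, hu, huv.trans hvw⟩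
  · rintro ⟨u, hu, huv⟩ T ⟨hT, hST⟩
    exact hT u v (hST hu) huv

lemma subset_heredClosure (S : Set G.V) : S ⊆ G.heredClosure S :=
  Set.subset_sInter fun _ hT => hT.2

lemma hereditary_heredClosure (S : Set G.V) : G.Hereditary (G.heredClosure S) :=
  fun u v hu huv T hT => hT.1 u v (hu T hT) huv

lemma Hereditary.heredClosure_subset_iff (hH : G.Hereditary H) :
    G.heredClosure S ⊆ H ↔ S ⊆ H :=
  ⟨(subset_heredClosure S).trans, fun h => Set.sInter_subset_of_mem ⟨hH, h⟩⟩

lemma subset_saturate (S : Set G.V) : S ⊆ G.saturate S :=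
  Set.subset_sInter fun _ hT => hT.2

lemma saturated_saturate (S : Set G.V) : G.Saturated (G.saturate S) :=
  fun v hv h T hT => hT.1 v hv fun e he => h e he T hT

lemma Saturated.saturate_subset_iff (hH : G.Saturated H) : G.saturate S ⊆ H ↔ S ⊆ H :=
  ⟨(subset_saturate S).trans, fun h => Set.sInter_subset_of_mem ⟨hH, h⟩⟩

lemma Hereditary.saturate (hS : G.Hereditary S) : G.Hereditary (G.saturate S) := by
  have saturated_core : G.Saturated {v | ∀ w, G.Reach v w → w ∈ G.saturate S} := by
    intro v hv h w hvw
    rcases hvw.cases_head with rfl | ⟨_, ⟨e, he, rfl⟩, hew⟩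
    · exact saturated_saturate S v hv fun e he => h e he _ .refl
    · exact h e he w hew
  have saturate_subset_core : G.saturate S ⊆ {v | ∀ w, G.Reach v w → w ∈ G.saturate S} :=
    saturated_core.saturate_subset_iff.mpr fun v hv w hvw => subset_saturate S (hS v w hv hvw)
  exact fun u v hu huv => saturate_subset_core hu v huv

lemma hereditary_saturate_heredClosure (S : Set G.V) :
    G.Hereditary (G.saturate (G.heredClosure S)) :=
  (hereditary_heredClosure S).saturate

lemma subset_saturate_heredClosure (S : Set G.V) : S ⊆ G.saturate (G.heredClosure S) :=
  (subset_heredClosure S).trans (subset_saturate _)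

lemma saturate_heredClosure_subset_iff (hH : G.Hereditary H) (hH' : G.Saturated H) :
    G.saturate (G.heredClosure S) ⊆ H ↔ S ⊆ H :=
  hH'.saturate_subset_iff.trans hH.heredClosure_subset_iff

end Closure

section Component

variable {G : DirGraph} {γ S H : Set G.V} {v : G.V}

/-- The set of vertices mutually reachable with `v`. It is the component of `v` unless `v` is a
transition state, in which case it is `{v}` and not a component. -/
def strongComponent (v : G.V) : Set G.V := {w | G.Reach v w ∧ G.Reach w v}

lemma mem_strongComponent_self (v : G.V) : v ∈ strongComponent v := ⟨.refl, .refl⟩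

lemma strongComponent_eq_singleton (hv : ¬ G.SupportsCycle v) : strongComponent v = {v} := by
  refine Set.eq_singleton_iff_unique_mem.mpr ⟨mem_strongComponent_self v, ?_⟩
  rintro w ⟨hvw, hwv⟩
  exact (Relation.reflTransGen_iff_eq_or_transGen.mp hvw).resolve_right
    fun hvw => hv (hvw.trans_left hwv)

lemma SupportsCycle.stronglyConn_strongComponent (hv : G.SupportsCycle v) :
    G.StronglyConn (strongComponent v) :=
  ⟨⟨v, mem_strongComponent_self v⟩,
    fun _ ha _ hb => (Relation.TransGen.trans_right ha.2 hv).trans_left hb.1⟩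

lemma StronglyConn.subset_strongComponent (hγ : G.StronglyConn γ) (hv : v ∈ γ) :
    γ ⊆ strongComponent v :=
  fun w hw => ⟨(hγ.2 v hv w hw).to_reflTransGen, (hγ.2 w hw v hv).to_reflTransGen⟩

lemma isComponent_strongComponent (hv : ¬ G.TransitionState v) :
    G.IsComponent (strongComponent v) := by
  by_cases hcyc : G.SupportsCycle v
  · exact .inl ⟨hcyc.stronglyConn_strongComponent, fun δ hδ h =>
      (hδ.subset_strongComponent (h (mem_strongComponent_self v))).antisymm h⟩
  · exact .inr ⟨v, strongComponent_eq_singleton hcyc, fun hreg => hv ⟨hreg, hcyc⟩, hcyc⟩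

lemma IsComponent.nonempty (hγ : G.IsComponent γ) : γ.Nonempty := by
  rcases hγ with ⟨hγ, -⟩ | ⟨v, rfl, -⟩
  exacts [hγ.1, Set.singleton_nonempty v]

lemma IsComponent.not_transitionState (hγ : G.IsComponent γ) (hv : v ∈ γ) :
    ¬ G.TransitionState v := by
  rcases hγ with ⟨hγ, -⟩ | ⟨w, rfl, hreg, -⟩
  · exact fun h => h.2 (hγ.2 v hv v hv)
  · rw [Set.mem_singleton_iff.mp hv]
    exact fun h => hreg h.1

lemma IsComponent.eq_strongComponent (hγ : G.IsComponent γ) (hv : v ∈ γ) :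
    γ = strongComponent v := by
  rcases hγ with ⟨hγ, hmax⟩ | ⟨w, rfl, -, hcyc⟩
  · have hcyc : G.SupportsCycle v := hγ.2 v hv v hv
    exact (hmax _ hcyc.stronglyConn_strongComponent (hγ.subset_strongComponent hv)).symm
  · rw [Set.mem_singleton_iff.mp hv, strongComponent_eq_singleton hcyc]

lemma pairwiseDisjoint_isComponent (G : DirGraph) :
    {γ : Set G.V | G.IsComponent γ}.PairwiseDisjoint id :=
  fun _ hγ _ hδ hne => Set.disjoint_left.mpr fun _ hvγ hvδ =>
    hne ((hγ.eq_strongComponent hvγ).trans (hδ.eq_strongComponent hvδ).symm)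

lemma IsComponent.subset_of_inter_nonempty (hγ : G.IsComponent γ) (hH : G.Hereditary H)
    (h : (γ ∩ H).Nonempty) : γ ⊆ H := by
  obtain ⟨u, huγ, huH⟩ := h
  rw [hγ.eq_strongComponent huγ]
  exact fun v hv => hH u v huH hv.1

lemma IsComponent.saturated_compl (hγ : G.IsComponent γ) : G.Saturated γᶜ := by
  intro v hreg hout hv
  have hcyc : G.SupportsCycle v := by
    by_contra hcyc
    exact hγ.not_transitionState hv ⟨hreg, hcyc⟩
  obtain ⟨_, ⟨e, he, rfl⟩, hev⟩ := Relation.TransGen.head'_iff.mp hcyc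
  refine hout e he ?_
  rw [hγ.eq_strongComponent hv]
  exact ⟨.single ⟨e, he, rfl⟩, hev⟩

lemma IsComponent.inter_nonempty_of_saturate (hγ : G.IsComponent γ)
    (h : (γ ∩ G.saturate S).Nonempty) : (γ ∩ S).Nonempty := by
  contrapose! h
  rw [← Set.disjoint_iff_inter_eq_empty, ← Set.subset_compl_iff_disjoint_left] at h ⊢
  exact hγ.saturated_compl.saturate_subset_iff.mpr h

end Component

section TransitionStep

/-- The step relation out of transition states, with the source as second argument: it is
well-founded iff no infinite path runs through transition states only. -/
def TransitionStep (G : DirGraph) (w v : G.V) : Prop := G.TransitionState v ∧ G.Step v w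

lemma wellFounded_transitionStep (G : DirGraph) [Finite G.V] : WellFounded G.TransitionStep := by
  have irrefl (v : G.V) : ¬ Relation.TransGen G.TransitionStep v v := by
    intro hvv
    obtain ⟨_, -, hv, -⟩ := Relation.TransGen.tail'_iff.mp hvv
    have hback : Relation.TransGen (Function.swap G.Step) v v :=
      Relation.TransGen.mono (fun _ _ h => h.2) v v hvv
    exact hv.2 (Relation.transGen_swap.mp hback)
  have : Std.Irrefl (Relation.TransGen G.TransitionStep) := ⟨irrefl⟩
  exact Subrelation.wf Relation.TransGen.single
    (Finite.wellFounded_of_trans_of_irrefl (Relation.TransGen G.TransitionStep))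

end TransitionStep

section Correspondence

variable {G : DirGraph} {η η₁ η₂ : Set (Set G.V)} {H K : Set G.V}

/-- The set of components that intersect `H` nontrivially, from which a saturated hereditary `H`
is recovered as `saturate (heredClosure (⋃₀ componentsMeeting H))`. -/
def componentsMeeting (H : Set G.V) : Set (Set G.V) :=
  {γ | G.IsComponent γ ∧ (γ ∩ H).Nonempty}

lemma Hereditary.heredComp_componentsMeeting (hH : G.Hereditary H) :
    G.HeredComp (componentsMeeting H) := by
  refine ⟨fun γ hγ => hγ.1, ?_⟩
  rintro γ δ ⟨hγ, hγH⟩ hδ ⟨u, hu, w, hw, huw⟩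
  exact ⟨hδ, w, hw, hH u w (hγ.subset_of_inter_nonempty hH hγH hu) huw⟩

lemma Hereditary.sUnion_componentsMeeting_subset (hH : G.Hereditary H) :
    ⋃₀ componentsMeeting H ⊆ H :=
  Set.sUnion_subset fun _ hγ => hγ.1.subset_of_inter_nonempty hH hγ.2

lemma Hereditary.sUnion_isComponent_inter (hH : G.Hereditary H) :
    ⋃₀ {γ : Set G.V | G.IsComponent γ} ∩ H = ⋃₀ componentsMeeting H := by
  refine Set.Subset.antisymm ?_ (Set.subset_inter ?_ hH.sUnion_componentsMeeting_subset)
  · rintro v ⟨⟨γ, hγ, hv⟩, hvH⟩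
    exact ⟨γ, ⟨hγ, v, hv, hvH⟩, hv⟩
  · exact Set.sUnion_subset_sUnion fun _ hγ => hγ.1

lemma HeredComp.componentsMeeting_saturate_heredClosure (hη : G.HeredComp η) :
    componentsMeeting (G.saturate (G.heredClosure (⋃₀ η))) = η := by
  ext γ
  constructor
  · rintro ⟨hγ, hmeet⟩
    obtain ⟨w, hw, hwη⟩ := hγ.inter_nonempty_of_saturate hmeet
    obtain ⟨u, ⟨δ, hδ, hu⟩, huw⟩ := mem_heredClosure.mp hwη
    exact hη.2 δ γ hδ hγ ⟨u, hu, w, hw, huw⟩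
  · intro hγ
    obtain ⟨v, hv⟩ := (hη.1 γ hγ).nonempty
    exact ⟨hη.1 γ hγ, v, hv, subset_saturate_heredClosure _ ⟨γ, hγ, hv⟩⟩

lemma HeredComp.subset_iff_saturate_heredClosure_subset (h₁ : G.HeredComp η₁)
    (h₂ : G.HeredComp η₂) :
    η₁ ⊆ η₂ ↔
      G.saturate (G.heredClosure (⋃₀ η₁)) ⊆ G.saturate (G.heredClosure (⋃₀ η₂)) := by
  constructor
  · intro h
    rw [saturate_heredClosure_subset_iff (hereditary_saturate_heredClosure _)
      (saturated_saturate _)]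
    exact (Set.sUnion_subset_sUnion h).trans (subset_saturate_heredClosure _)
  · intro h
    rw [← h₁.componentsMeeting_saturate_heredClosure,
      ← h₂.componentsMeeting_saturate_heredClosure]
    exact fun γ hγ => ⟨hγ.1, hγ.2.mono (Set.inter_subset_inter_right γ h)⟩

lemma Hereditary.subset_of_sUnion_componentsMeeting_subset (hwf : WellFounded G.TransitionStep)
    (hH : G.Hereditary H) (hK : G.Saturated K) (h : ⋃₀ componentsMeeting H ⊆ K) : H ⊆ K := by
  intro v
  induction v using hwf.induction with
  | _ v ih =>
    intro hv
    by_cases htrans : G.TransitionState v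
    · refine hK v htrans.1 fun e he => ?_
      have hstep : G.Step v (G.r e) := ⟨e, he, rfl⟩
      exact ih (G.r e) ⟨htrans, hstep⟩ (hH v _ hv (.single hstep))
    · have hmem := mem_strongComponent_self v
      exact h ⟨strongComponent v, ⟨isComponent_strongComponent htrans, v, hmem, hv⟩, hmem⟩

lemma Hereditary.saturate_heredClosure_sUnion_componentsMeeting
    (hwf : WellFounded G.TransitionStep) (hH : G.Hereditary H) (hH' : G.Saturated H) :
    G.saturate (G.heredClosure (⋃₀ componentsMeeting H)) = H :=
  Set.Subset.antisymm
    ((saturate_heredClosure_subset_iff hH hH').mpr hH.sUnion_componentsMeeting_subset)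
    (hH.subset_of_sUnion_componentsMeeting_subset hwf (saturated_saturate _)
      (subset_saturate_heredClosure _))

end Correspondence

end DirGraph

open DirGraph in
theorem stmt1_general (G : DirGraph) (hwf : WellFounded G.TransitionStep) :
    (∀ η₁ η₂ : Set (Set G.V), G.HeredComp η₁ → G.HeredComp η₂ →
      (η₁ ⊆ η₂ ↔
        G.saturate (G.heredClosure (⋃₀ η₁)) ⊆ G.saturate (G.heredClosure (⋃₀ η₂)))) ∧
    (∀ η : Set (Set G.V), G.HeredComp η →
      G.Hereditary (G.saturate (G.heredClosure (⋃₀ η))) ∧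
      G.Saturated (G.saturate (G.heredClosure (⋃₀ η))) ∧
      ⋃₀ η = (⋃₀ {γ : Set G.V | G.IsComponent γ}) ∩ G.saturate (G.heredClosure (⋃₀ η))) ∧
    (∀ H : Set G.V, G.Hereditary H → G.Saturated H →
      ((⋃₀ {γ : Set G.V | G.IsComponent γ}) ∩ H =
        ⋃₀ {γ : Set G.V | G.IsComponent γ ∧ (γ ∩ H).Nonempty}) ∧
      (∀ γ δ : Set G.V, G.IsComponent γ → G.IsComponent δ →
        (γ ∩ H).Nonempty → (δ ∩ H).Nonempty → γ ≠ δ → Disjoint γ δ) ∧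
      G.HeredComp {γ : Set G.V | G.IsComponent γ ∧ (γ ∩ H).Nonempty} ∧
      G.saturate (G.heredClosure
        (⋃₀ {γ : Set G.V | G.IsComponent γ ∧ (γ ∩ H).Nonempty})) = H) := by
  refine ⟨fun η₁ η₂ h₁ h₂ => h₁.subset_iff_saturate_heredClosure_subset h₂,
    fun η hη => ⟨hereditary_saturate_heredClosure _, saturated_saturate _, ?_⟩,
    fun H hH hH' => ⟨hH.sUnion_isComponent_inter, ?_, hH.heredComp_componentsMeeting,
      hH.saturate_heredClosure_sUnion_componentsMeeting hwf hH'⟩⟩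
  · rw [(hereditary_saturate_heredClosure _).sUnion_isComponent_inter,
      hη.componentsMeeting_saturate_heredClosure]
  · exact fun γ δ hγ hδ _ _ hne => pairwiseDisjoint_isComponent G hγ hδ hne

open DirGraph in
/-- Lemma `lem:structure-b`: the map `η ↦ saturation of H(∪η)` is a
bijective order isomorphism from the hereditary subsets of `Γ_E` onto the saturated
hereditary subsets of `E⁰`, with `∪η = (∪Γ_E) ∩ saturation of H(∪η)`; conversely
every saturated hereditary `H` arises from the hereditary set of components meeting
`H`, and `(∪Γ_E) ∩ H` is the disjoint union of those components. -/
theorem stmt1 (G : DirGraph) (hcE : Countable G.E) (hfin : Finite G.V) :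
    (∀ η₁ η₂ : Set (Set G.V), G.HeredComp η₁ → G.HeredComp η₂ →
      (η₁ ⊆ η₂ ↔
        G.saturate (G.heredClosure (⋃₀ η₁)) ⊆ G.saturate (G.heredClosure (⋃₀ η₂)))) ∧
    (∀ η : Set (Set G.V), G.HeredComp η →
      G.Hereditary (G.saturate (G.heredClosure (⋃₀ η))) ∧
      G.Saturated (G.saturate (G.heredClosure (⋃₀ η))) ∧
      ⋃₀ η = (⋃₀ {γ : Set G.V | G.IsComponent γ}) ∩ G.saturate (G.heredClosure (⋃₀ η))) ∧
    (∀ H : Set G.V, G.Hereditary H → G.Saturated H →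
      ((⋃₀ {γ : Set G.V | G.IsComponent γ}) ∩ H =
        ⋃₀ {γ : Set G.V | G.IsComponent γ ∧ (γ ∩ H).Nonempty}) ∧
      (∀ γ δ : Set G.V, G.IsComponent γ → G.IsComponent δ →
        (γ ∩ H).Nonempty → (δ ∩ H).Nonempty → γ ≠ δ → Disjoint γ δ) ∧
      G.HeredComp {γ : Set G.V | G.IsComponent γ ∧ (γ ∩ H).Nonempty} ∧
      G.saturate (G.heredClosure
        (⋃₀ {γ : Set G.V | G.IsComponent γ ∧ (γ ∩ H).Nonempty})) = H) :=
  stmt1_general G (wellFounded_transitionStep G)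
end

section
/- Let E be a graph with finitely many vertices in which every transition state has exactly one outgoing edge. Then for any two saturated hereditary subsets H₁, H₂ ⊆ E⁰, the union H₁ ∪ H₂ is saturated (so H₁ ∪ H₂ equals its own saturation). -/
attribute [local instance] Classical.propDecidable

namespace DirGraph

variable {G : DirGraph} {v : G.V} {S : Set G.V}

lemma SupportsCycle.exists_edge_reach (hv : G.SupportsCycle v) :
    ∃ e : G.E, G.s e = v ∧ G.Reach (G.r e) v := by
  obtain ⟨_, ⟨e, hs, rfl⟩, hreach⟩ := Relation.TransGen.head'_iff.mp hv
  exact ⟨e, hs, hreach⟩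

lemma Hereditary.mem_of_supportsCycle (hS : G.Hereditary S) (hv : G.SupportsCycle v)
    (hout : ∀ e : G.E, G.s e = v → G.r e ∈ S) : v ∈ S := by
  obtain ⟨e, hs, hreach⟩ := hv.exists_edge_reach
  exact hS _ _ (hout e hs) hreach

lemma Hereditary.iUnion {ι : Sort*} {H : ι → Set G.V} (hH : ∀ i, G.Hereditary (H i)) :
    G.Hereditary (⋃ i, H i) := by
  intro u w hu huw
  obtain ⟨i, hi⟩ := Set.mem_iUnion.mp hu
  exact Set.mem_iUnion_of_mem i (hH i u w hi huw)

lemma Saturated.source_mem_of_existsUnique (hS : G.Saturated S) {e : G.E}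
    (hreg : G.Regular (G.s e)) (huniq : ∃! f : G.E, G.s f = G.s e) (he : G.r e ∈ S) :
    G.s e ∈ S :=
  hS _ hreg fun _ hf => huniq.unique rfl hf ▸ he

lemma Saturated.saturate_eq (hS : G.Saturated S) : G.saturate S = S :=
  Set.Subset.antisymm (Set.sInter_subset_of_mem ⟨hS, Set.Subset.rfl⟩)
    (Set.subset_sInter fun _ hT => hT.2)

end DirGraph

theorem stmt3_general (G : DirGraph)
    (ht : ∀ v : G.V, G.TransitionState v → ∃! e : G.E, G.s e = v)
    {ι : Sort*} (H : ι → Set G.V) (hH : ∀ i, G.Hereditary (H i))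
    (hsH : ∀ i, G.Saturated (H i)) :
    G.Saturated (⋃ i, H i) ∧ G.saturate (⋃ i, H i) = ⋃ i, H i := by
  have hsat : G.Saturated (⋃ i, H i) := by
    intro v hreg hout
    by_cases hcycle : G.SupportsCycle v
    · exact (DirGraph.Hereditary.iUnion hH).mem_of_supportsCycle hcycle hout
    · have huniq := ht v ⟨hreg, hcycle⟩
      obtain ⟨e, rfl⟩ := huniq.exists
      obtain ⟨i, hi⟩ := Set.mem_iUnion.mp (hout e rfl)
      exact Set.mem_iUnion_of_mem i ((hsH i).source_mem_of_existsUnique hreg huniq hi)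
  exact ⟨hsat, hsat.saturate_eq⟩

open DirGraph in
/-- Lemma `lem:structure-2(i)`: if every transition state of `G` has
exactly one outgoing edge, then the union of two saturated hereditary sets is
saturated (hence equals its own saturation). -/
theorem stmt3 (G : DirGraph) (hcE : Countable G.E) (hfin : Finite G.V)
    (ht : ∀ v : G.V, G.TransitionState v → ∃! e : G.E, G.s e = v)
    (H₁ H₂ : Set G.V) (hH₁ : G.Hereditary H₁) (hsH₁ : G.Saturated H₁)
    (hH₂ : G.Hereditary H₂) (hsH₂ : G.Saturated H₂) :
    G.Saturated (H₁ ∪ H₂) ∧ G.saturate (H₁ ∪ H₂) = H₁ ∪ H₂ := by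
  simpa only [Set.union_eq_iUnion] using stmt3_general G ht (fun b => cond b H₁ H₂)
    (Bool.forall_bool.mpr ⟨hH₂, hH₁⟩) (Bool.forall_bool.mpr ⟨hsH₂, hsH₁⟩)
end
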